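/- arXiv:2603.05298 — 2 statements merged into one kernel-verified Lean document; each statement's English description precedes it below -/
import Mathlib

section
/- Let N ≥ 1 be an integer, s ∈ (0,1), and let φ : ℝ^N → ℝ be bounded and Lipschitz with Lipschitz constant L. Then for every x ∈ ℝ^N the integral defining ∇^s φ(x) converges absolutely and |∇^s φ(x)| ≤ C(N) ((1−s)/s)^{1−s} ‖φ‖_{L^∞(ℝ^N)}^{1−s} L^s, where the constant C(N) > 0 depends only on N. -/
/-!
Since `|φ x - φ y| ≤ min (L |x - y|) (2 M)`, the integrand is dominated in norm by the radial
function `min (L r) (2 M) r^{-N-s}` of `r = |x - y|`. In polar coordinates its integral is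
`N |B₁| ∫₀^∞ min (L r) (2 M) r^{-1-s} dr`, and splitting at `r = 2 M / L` gives the exact value
`N |B₁| L^s (2 M)^{1-s} / (s (1 - s))` (`radial_integral`). When `L = 0` or `M = 0` the function
`φ` is constant and everything vanishes.

It remains to see that `μ(N, s) / (s (1 - s)) ≤ C(N) ((1 - s) / s)^{1-s}`. The functional equation
of `Γ` turns the pole of `Γ((1 - s) / 2)` at `s = 1` into a factor `1 - s`, so that
`μ(N, s) ≤ K(N) (1 - s)` by compactness (`mu_bound`), and `s⁻¹ ≤ e ((1 - s) / s)^{1-s}` because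
`s^s (1 - s)^{1-s} ≥ e⁻¹` (`inv_le_entropy`).
-/

open MeasureTheory Metric Real
open scoped ENNReal NNReal RealInnerProductSpace

noncomputable section

/-- Euclidean space `ℝ^N`. -/
abbrev Euc (N : ℕ) := EuclideanSpace ℝ (Fin N)

/-- The normalizing constant of the Riesz fractional gradient of order `s` in dimension `N`. -/
def mu (N : ℕ) (s : ℝ) : ℝ :=
  2 ^ s * Real.Gamma (((N : ℝ) + s + 1) / 2) /
    (Real.pi ^ ((N : ℝ) / 2) * Real.Gamma ((1 - s) / 2))

/-- The integrand `(f x - f y) (x - y) / |x - y|^{N+s+1}` of the Riesz fractional gradient. -/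
def gradIntegrand (N : ℕ) (s : ℝ) (f : Euc N → ℝ) (x y : Euc N) : Euc N :=
  ((f x - f y) / ‖x - y‖ ^ ((N : ℝ) + s + 1)) • (x - y)

/-- The Riesz fractional gradient `∇^s f` (meaningful at points where the integrand is
absolutely integrable). -/
def fracGrad (N : ℕ) (s : ℝ) (f : Euc N → ℝ) (x : Euc N) : Euc N :=
  mu N s • ∫ y, gradIntegrand N s f x y

lemma continuousAt_Gamma_of_pos {t : ℝ} (ht : 0 < t) : ContinuousAt Real.Gamma t := by
  refine (Real.differentiableAt_Gamma fun m => ?_).continuousAt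
  have : (0 : ℝ) ≤ m := m.cast_nonneg
  linarith

/-- The normalizing constant is nonnegative and vanishes at least linearly as `s → 1`. -/
lemma mu_bound (N : ℕ) : ∃ K : ℝ, 0 < K ∧ ∀ s ∈ Set.Ioo (0 : ℝ) 1,
    0 ≤ mu N s ∧ mu N s ≤ K * (1 - s) := by
  set F : ℝ → ℝ := fun s => 2 ^ s * Real.Gamma (((N : ℝ) + s + 1) / 2) /
    (Real.pi ^ ((N : ℝ) / 2) * Real.Gamma ((1 - s) / 2 + 1)) with hF
  have hN : (0 : ℝ) ≤ N := N.cast_nonneg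
  have hcont : ContinuousOn F (Set.Icc 0 1) := by
    intro s hs
    obtain ⟨h0, h1⟩ := hs
    refine ContinuousAt.continuousWithinAt ?_
    have hg1 : ContinuousAt (fun s : ℝ => Real.Gamma (((N : ℝ) + s + 1) / 2)) s :=
      ContinuousAt.comp (f := fun s : ℝ => ((N : ℝ) + s + 1) / 2)
        (continuousAt_Gamma_of_pos (by linarith)) (by fun_prop)
    have hg2 : ContinuousAt (fun s : ℝ => Real.Gamma ((1 - s) / 2 + 1)) s :=
      ContinuousAt.comp (f := fun s : ℝ => (1 - s) / 2 + 1)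
        (continuousAt_Gamma_of_pos (by linarith)) (by fun_prop)
    have hp : ContinuousAt (fun s : ℝ => (2 : ℝ) ^ s) s :=
      (Real.continuous_const_rpow (by norm_num)).continuousAt
    refine (hp.mul hg1).div (continuousAt_const.mul hg2) ?_
    have := Real.Gamma_pos_of_pos (show 0 < (1 - s) / 2 + 1 by linarith)
    positivity
  obtain ⟨K, hK⟩ := (isCompact_Icc.image_of_continuousOn hcont).bddAbove
  refine ⟨max K 1, by positivity, fun s hs => ?_⟩
  obtain ⟨h0, h1⟩ := hs
  have hFK : F s ≤ K := hK ⟨s, ⟨h0.le, h1.le⟩, rfl⟩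
  have hG := Real.Gamma_pos_of_pos (show 0 < (1 - s) / 2 by linarith)
  have hG1 := Real.Gamma_pos_of_pos (show 0 < ((N : ℝ) + s + 1) / 2 by linarith)
  have hmu : mu N s = F s * ((1 - s) / 2) := by
    have h2 : (1 - s) / 2 ≠ 0 := by linarith
    simp only [mu, hF]
    rw [Real.Gamma_add_one h2]
    have : 0 < Real.pi ^ ((N : ℝ) / 2) := by positivity
    have h3 : 1 - s ≠ 0 := by linarith
    field_simp
  refine ⟨by unfold mu; positivity, ?_⟩
  rw [hmu]
  have : F s ≤ max K 1 := hFK.trans (le_max_left _ _)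
  have h1' : (1 : ℝ) ≤ max K 1 := le_max_right _ _
  nlinarith

/-- Equivalent to `s^s (1 - s)^{1-s} ≥ e⁻¹`, which follows from `t log t ≥ t - 1`. -/
lemma inv_le_entropy {s : ℝ} (h0 : 0 < s) (h1 : s < 1) :
    s⁻¹ ≤ Real.exp 1 * ((1 - s) / s) ^ (1 - s) := by
  have h1' : 0 < 1 - s := by linarith
  rw [Real.rpow_def_of_pos (by positivity), ← Real.exp_add, Real.log_div h1'.ne' h0.ne']
  conv_lhs => rw [← Real.exp_log (inv_pos.2 h0), Real.log_inv]
  refine Real.exp_le_exp.2 ?_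
  have key : ∀ t : ℝ, 0 < t → t - 1 ≤ t * Real.log t := by
    intro t ht
    have h := mul_le_mul_of_nonneg_left (Real.one_sub_inv_le_log_of_pos ht) ht.le
    rwa [mul_sub, mul_one, mul_inv_cancel₀ ht.ne'] at h
  have ha := key s h0
  have hb := key (1 - s) h1'
  nlinarith

/-- The one-dimensional integral left after passing to polar coordinates. The two arguments of the
minimum agree at `r = B / A`, where the integral is split. -/
lemma radial_integral {s A B : ℝ} (h0 : 0 < s) (h1 : s < 1) (hA : 0 < A) (hB : 0 < B) :
    IntegrableOn (fun r : ℝ => min (A * r) B * r ^ (-1 - s)) (Set.Ioi 0) ∧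
    ∫ r in Set.Ioi (0 : ℝ), min (A * r) B * r ^ (-1 - s) =
      A ^ s * B ^ (1 - s) / (s * (1 - s)) := by
  set R := B / A with hR
  have hRpos : 0 < R := by positivity
  have e1 : Set.EqOn (fun r : ℝ => A * r ^ (-s)) (fun r : ℝ => min (A * r) B * r ^ (-1 - s))
      (Set.Ioc 0 R) := by
    intro r hr
    have hle : A * r ≤ B := by
      have := (le_div_iff₀ hA).1 hr.2
      linarith
    simp only
    rw [min_eq_left hle, mul_assoc]
    congr 1
    rw [show -s = 1 + (-1 - s) by ring, Real.rpow_add hr.1, Real.rpow_one]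
  have e2 : Set.EqOn (fun r : ℝ => B * r ^ (-1 - s)) (fun r : ℝ => min (A * r) B * r ^ (-1 - s))
      (Set.Ioi R) := by
    intro r hr
    have hle : B ≤ A * r := by
      have := (div_lt_iff₀ hA).1 (Set.mem_Ioi.1 hr)
      linarith
    simp only
    rw [min_eq_right hle]
  have i1 : IntegrableOn (fun r : ℝ => A * r ^ (-s)) (Set.Ioc 0 R) :=
    ((intervalIntegrable_iff_integrableOn_Ioc_of_le hRpos.le).1
      (intervalIntegral.intervalIntegrable_rpow' (by linarith))).const_mul A
  have i2 : IntegrableOn (fun r : ℝ => B * r ^ (-1 - s)) (Set.Ioi R) :=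
    (integrableOn_Ioi_rpow_of_lt (by linarith) hRpos).const_mul B
  have j1 := i1.congr_fun e1 measurableSet_Ioc
  have j2 := i2.congr_fun e2 measurableSet_Ioi
  rw [← Set.Ioc_union_Ioi_eq_Ioi hRpos.le]
  refine ⟨j1.union j2, ?_⟩
  rw [setIntegral_union Set.Ioc_disjoint_Ioi_same measurableSet_Ioi j1 j2,
    ← setIntegral_congr_fun measurableSet_Ioc e1, ← setIntegral_congr_fun measurableSet_Ioi e2,
    integral_const_mul, integral_const_mul, integral_Ioi_rpow_of_lt (by linarith) hRpos,
    ← intervalIntegral.integral_of_le hRpos.le, integral_rpow (Or.inl (by linarith)),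
    Real.zero_rpow (by linarith), show -1 - s + 1 = -s by ring, show -s + 1 = 1 - s by ring,
    hR, Real.div_rpow hB.le hA.le, Real.div_rpow hB.le hA.le, Real.rpow_neg hA.le,
    Real.rpow_neg hB.le, Real.rpow_sub hA, Real.rpow_sub hB, Real.rpow_one, Real.rpow_one]
  have hAs : 0 < A ^ s := by positivity
  have hBs : 0 < B ^ s := by positivity
  have h3 : 1 - s ≠ 0 := by linarith
  field_simp
  ring

/-- Pointwise bound for the Riesz fractional gradient of a bounded Lipschitz function:
`|∇^s φ(x)| ≤ C(N) ((1-s)/s)^{1-s} ‖φ‖_∞^{1-s} L^s`, with convergence of the defining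
integral at every point. -/
theorem stmt1 (N : ℕ) (hN : 1 ≤ N) :
    ∃ C : ℝ, 0 < C ∧
      ∀ s ∈ Set.Ioo (0 : ℝ) 1, ∀ (φ : Euc N → ℝ) (L : ℝ≥0) (M : ℝ),
        LipschitzWith L φ → (∀ x, |φ x| ≤ M) →
        ∀ x : Euc N,
          Integrable (gradIntegrand N s φ x) ∧
          ‖fracGrad N s φ x‖ ≤ C * ((1 - s) / s) ^ (1 - s) * M ^ (1 - s) * (L : ℝ) ^ s := by
  obtain ⟨K, hK, hmu⟩ := mu_bound N
  have : Nonempty (Fin N) := ⟨⟨0, hN⟩⟩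
  set σ : ℝ := (N : ℝ) * (volume : Measure (Euc N)).real (ball 0 1) with hσ
  have hσpos : 0 < σ := by
    have hv : 0 < (volume : Measure (Euc N)).real (ball 0 1) :=
      ENNReal.toReal_pos (measure_ball_pos _ _ one_pos).ne' measure_ball_lt_top.ne
    have : (0 : ℝ) < N := by exact_mod_cast hN
    positivity
  refine ⟨σ * K * 2 * Real.exp 1, by positivity, ?_⟩
  rintro s ⟨h0, h1⟩ φ L M hφ hM x
  have h1' : 0 < 1 - s := by linarith
  obtain ⟨hmu0, hmu1⟩ := hmu s ⟨h0, h1⟩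
  have hM0 : 0 ≤ M := (abs_nonneg _).trans (hM x)
  have hlip : ∀ y, |φ x - φ y| ≤ L * ‖x - y‖ := fun y => by
    simpa [Real.dist_eq, dist_eq_norm] using hφ.dist_le_mul x y
  have hbd : ∀ y, |φ x - φ y| ≤ 2 * M := fun y => by
    have := abs_sub (φ x) (φ y)
    linarith [hM x, hM y]
  by_cases hdeg : (L : ℝ) = 0 ∨ M = 0
  · have hz : gradIntegrand N s φ x = fun _ => 0 := by
      funext y
      have : φ x - φ y = 0 := by
        rw [← abs_nonpos_iff]
        rcases hdeg with h | h
        · simpa [h] using hlip y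
        · simpa [h] using hbd y
      simp [gradIntegrand, this]
    refine ⟨by rw [hz]; exact integrable_zero _ _ _, ?_⟩
    simp only [fracGrad, hz, integral_zero, smul_zero, norm_zero]
    positivity
  push Not at hdeg
  have hL : 0 < (L : ℝ) := lt_of_le_of_ne L.coe_nonneg hdeg.1.symm
  have hMpos : 0 < M := lt_of_le_of_ne hM0 hdeg.2.symm
  obtain ⟨hri, hrv⟩ := radial_integral h0 h1 hL (show 0 < 2 * M by positivity)
  -- The radial majorant of the integrand, as a function of the distance `r = |x - y|`.
  set g : ℝ → ℝ := fun r => min (L * r) (2 * M) * r ^ (-((N : ℝ) + s)) with hg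
  have hpol : Set.EqOn (fun r : ℝ => min (L * r) (2 * M) * r ^ (-1 - s))
      (fun r : ℝ => r ^ (Module.finrank ℝ (Euc N) - 1) • g r) (Set.Ioi 0) := by
    intro r hr
    have hr : 0 < r := hr
    simp only [hg, smul_eq_mul, finrank_euclideanSpace, Fintype.card_fin]
    rw [mul_left_comm, ← Real.rpow_natCast, ← Real.rpow_add hr, Nat.cast_sub hN]
    congr 2
    push_cast
    ring
  have hgi : Integrable (fun y : Euc N => g ‖y‖) :=
    (integrable_fun_norm_addHaar volume).2 (hri.congr_fun hpol measurableSet_Ioi)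
  have hgv : ∫ y : Euc N, g ‖y‖ = σ * ((L : ℝ) ^ s * (2 * M) ^ (1 - s) / (s * (1 - s))) := by
    rw [integral_fun_norm_addHaar volume g, ← setIntegral_congr_fun measurableSet_Ioi hpol, hrv]
    simp [hσ, mul_assoc]
  have hgi' : Integrable (fun y : Euc N => g ‖x - y‖) := hgi.comp_sub_left x
  have hgv' : ∫ y : Euc N, g ‖x - y‖ = ∫ y : Euc N, g ‖y‖ :=
    integral_sub_left_eq_self (fun y => g ‖y‖) volume x
  have hdom : ∀ y, ‖gradIntegrand N s φ x y‖ ≤ g ‖x - y‖ := by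
    intro y
    -- At `y = x` the factor `x - y` vanishes, and the bound only needs `0 ≤ g 0`.
    rcases eq_or_ne x y with rfl | hxy
    · simp [gradIntegrand, hg, hM0]
    have hr : 0 < ‖x - y‖ := norm_pos_iff.2 (sub_ne_zero.2 hxy)
    have hpow : ‖x - y‖ ^ (-((N : ℝ) + s)) = ‖x - y‖ / ‖x - y‖ ^ ((N : ℝ) + s + 1) := by
      rw [Real.rpow_add_one hr.ne', Real.rpow_neg hr.le]
      have : 0 < ‖x - y‖ ^ ((N : ℝ) + s) := by positivity
      field_simp
    simp only [hg, gradIntegrand]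
    rw [norm_smul, norm_div, Real.norm_eq_abs, Real.norm_of_nonneg (by positivity), hpow,
      div_mul_eq_mul_div, mul_div_assoc]
    gcongr
    exact le_min (hlip y) (hbd y)
  have hmeas : AEStronglyMeasurable (gradIntegrand N s φ x) volume := by
    have hc : Measurable φ := hφ.continuous.measurable
    unfold gradIntegrand
    exact Measurable.aestronglyMeasurable (by fun_prop)
  refine ⟨hgi'.mono' hmeas (Filter.Eventually.of_forall hdom), ?_⟩
  have hint : ‖∫ y, gradIntegrand N s φ x y‖ ≤
      σ * ((L : ℝ) ^ s * (2 * M) ^ (1 - s) / (s * (1 - s))) := by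
    rw [← hgv, ← hgv']
    exact norm_integral_le_of_norm_le hgi' (Filter.Eventually.of_forall hdom)
  have h2 : (2 : ℝ) ^ (1 - s) ≤ 2 := by
    simpa using Real.rpow_le_rpow_of_exponent_le (by norm_num : (1 : ℝ) ≤ 2)
      (by linarith : 1 - s ≤ 1)
  rw [fracGrad, norm_smul, Real.norm_of_nonneg hmu0]
  calc mu N s * ‖∫ y, gradIntegrand N s φ x y‖
      ≤ (K * (1 - s)) * (σ * ((L : ℝ) ^ s * (2 * M) ^ (1 - s) / (s * (1 - s)))) := by gcongr
    _ = σ * K * (2 : ℝ) ^ (1 - s) * s⁻¹ * M ^ (1 - s) * (L : ℝ) ^ s := by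
        rw [Real.mul_rpow (by norm_num) hM0]
        field_simp
    _ ≤ σ * K * 2 * (Real.exp 1 * ((1 - s) / s) ^ (1 - s)) * M ^ (1 - s) * (L : ℝ) ^ s := by
        gcongr
        exact inv_le_entropy h0 h1
    _ = _ := by ring
end
end

section
/- Let s ∈ (0,1), let φ : ℝ^N → ℝ and Φ : ℝ^N → ℝ^N be Lipschitz functions with compact support. Then the integrals defining ∇^s φ and div_s Φ converge absolutely at every point, both ∇^s φ and div_s Φ are integrable against φ and Φ respectively, and ∫_{ℝ^N} φ(x) div_s Φ(x) dx = − ∫_{ℝ^N} Φ(x) · ∇^s φ(x) dx. -/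
/-!
After the substitution `y = x - z`, both sides become double integrals of `φ(x) D(x, z)` and
`Φ(x) · G(x, z)`, where `D` and `G` contain the increments of `Φ` and `φ` in direction `z` against
the odd kernel `z / |z|^{N+s+1}`. A Lipschitz function with compact support has increments
`O(min(|z|, 1))` (`increment_bound`), so `D` and `G` are dominated, uniformly in `x`, by a multiple
of `min(|z|, 1) |z|^{-N-s}`. In polar coordinates this is integrable (`majorant_integrable`):
the radial density is `r^{-s}` near `0` and `r^{-1-s}` near infinity. Hence all the integrals
converge absolutely, also on the product space, and Fubini allows integrating in `x` first.

For fixed `z`, translation invariance in `x` and oddness of the kernel give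
`∫ φ(x) D(x, z) dx = -∫ Φ(x) · G(x, -z) dx` (`slice_identity`). Integrating over `z` and
reflecting `z ↦ -z` concludes. Since the `x`-integration is carried out at fixed `z`, no truncation
of the singularity is needed.
-/

open MeasureTheory Metric Real
open scoped ENNReal NNReal RealInnerProductSpace

noncomputable section

/-- The integrand `((Φ x - Φ y) · (x - y)) / |x - y|^{N+s+1}` of the Riesz fractional
divergence. -/
def divIntegrand (N : ℕ) (s : ℝ) (Φ : Euc N → Euc N) (x y : Euc N) : ℝ :=
  ⟪Φ x - Φ y, x - y⟫ / ‖x - y‖ ^ ((N : ℝ) + s + 1)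

/-- The Riesz fractional divergence `div_s Φ`. -/
def fracDiv (N : ℕ) (s : ℝ) (Φ : Euc N → Euc N) (x : Euc N) : ℝ :=
  mu N s * ∫ y, divIntegrand N s Φ x y

/-- The radial function `min(|z|, 1) |z| / |z|^{N+s+1}`, which up to a constant dominates both
integrands at `y = x - z`, uniformly in `x`. It takes the value `0` at `z = 0`. -/
def majorant (N : ℕ) (s : ℝ) (z : Euc N) : ℝ :=
  min ‖z‖ 1 * ‖z‖ / ‖z‖ ^ ((N : ℝ) + s + 1)

/-- In polar coordinates the density is `r^{-s}` on `(0, 1]` and `r^{-1-s}` on `(1, ∞)`. The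
hypothesis `1 ≤ N` makes the space nontrivial, as polar coordinates require. -/
lemma majorant_integrable (N : ℕ) (hN : 1 ≤ N) (s : ℝ) (hs : s ∈ Set.Ioo (0 : ℝ) 1) :
    Integrable (majorant N s) := by
  obtain ⟨hs0, hs1⟩ := hs
  have : NeZero N := ⟨by omega⟩
  have key := integrable_fun_norm_addHaar (volume : Measure (Euc N))
    (f := fun r : ℝ => min r 1 * r / r ^ ((N : ℝ) + s + 1))
  refine key.2 ?_
  have hpow : ∀ y : ℝ, 0 < y → y ^ (Module.finrank ℝ (Euc N) - 1) •
      (min y 1 * y / y ^ ((N : ℝ) + s + 1)) = min y 1 * y ^ (-1 - s) := by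
    intro y hy
    have h1 : y ^ (Module.finrank ℝ (Euc N) - 1) = y ^ ((N : ℝ) - 1) := by
      rw [finrank_euclideanSpace_fin, ← Real.rpow_natCast, Nat.cast_sub hN, Nat.cast_one]
    have h2 : y ^ (-1 - s) = y ^ ((N : ℝ) - 1) * y / y ^ ((N : ℝ) + s + 1) := by
      rw [← Real.rpow_add_one hy.ne', ← Real.rpow_sub hy]
      ring_nf
    rw [h1, h2, smul_eq_mul]
    ring
  rw [← Set.Ioc_union_Ioi_eq_Ioi zero_le_one]
  refine IntegrableOn.union ?_ ?_
  · have h : IntegrableOn (fun y : ℝ => y ^ (-s)) (Set.Ioc 0 1) :=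
      (intervalIntegrable_iff_integrableOn_Ioc_of_le zero_le_one).1
        (intervalIntegral.intervalIntegrable_rpow' (by linarith))
    refine h.congr_fun (fun y hy => ?_) measurableSet_Ioc
    have := hpow y hy.1
    simp only at this ⊢
    rw [this, min_eq_left hy.2, ← Real.rpow_one_add' hy.1.le (by linarith)]
    ring_nf
  · have h : IntegrableOn (fun y : ℝ => y ^ (-1 - s)) (Set.Ioi 1) :=
      integrableOn_Ioi_rpow_of_lt (by linarith) one_pos
    refine h.congr_fun (fun y hy => ?_) measurableSet_Ioi
    have hy' : (1 : ℝ) < y := hy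
    have := hpow y (by linarith)
    simp only at this ⊢
    rw [this, min_eq_right hy'.le, one_mul]

/-- The increments are `O(|z|)` by the Lipschitz condition, and bounded since compact support makes
`f` bounded. -/
lemma increment_bound {E F : Type*} [NormedAddCommGroup E] [NormedAddCommGroup F]
    {f : E → F} {L : ℝ≥0} (hf : LipschitzWith L f) (hc : HasCompactSupport f) :
    ∃ C : ℝ, ∀ x z, ‖f x - f (x - z)‖ ≤ C * min ‖z‖ 1 := by
  obtain ⟨M, hM⟩ := hf.continuous.bounded_above_of_compact_support hc
  refine ⟨max L (2 * M), fun x z => ?_⟩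
  rcases min_cases ‖z‖ 1 with ⟨h, -⟩ | ⟨h, -⟩ <;> rw [h]
  · have h1 := hf.norm_sub_le x (x - z)
    rw [sub_sub_cancel] at h1
    exact h1.trans (mul_le_mul_of_nonneg_right (le_max_left _ _) (norm_nonneg _))
  · have h1 := norm_sub_le (f x) (f (x - z))
    have h2 := hM x
    have h3 := hM (x - z)
    have h4 := le_max_right (L : ℝ) (2 * M)
    linarith

/-- For fixed `z`, translation invariance turns the `x`-integral of the divergence integrand into
minus that of the gradient integrand at `-z`: after the shift `x ↦ x - z` their sum is the
increment `g x - g (x - z)` of the integrable function `g = φ ⟪Φ, z⟫ / |z|^p`. -/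
lemma slice_identity {N : ℕ} (p : ℝ) {φ : Euc N → ℝ} {Φ : Euc N → Euc N}
    (hφ : Continuous φ) (hφc : HasCompactSupport φ) (hΦ : Continuous Φ)
    (hΦc : HasCompactSupport Φ) (z : Euc N) :
    ∫ x, φ x * (⟪Φ x - Φ (x - z), z⟫ / ‖z‖ ^ p) =
      - ∫ x, ⟪Φ x, ((φ x - φ (x - -z)) / ‖-z‖ ^ p) • -z⟫ := by
  have hg : Integrable (fun x => φ x * (⟪Φ x, z⟫ / ‖z‖ ^ p)) :=
    Continuous.integrable_of_hasCompactSupport (by fun_prop) hφc.mul_right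
  have h1 : Integrable (fun x => φ x * (⟪Φ x - Φ (x - z), z⟫ / ‖z‖ ^ p)) :=
    Continuous.integrable_of_hasCompactSupport (by fun_prop) hφc.mul_right
  have h2 : Integrable (fun x => ⟪Φ x, ((φ x - φ (x - -z)) / ‖-z‖ ^ p) • -z⟫) := by
    refine Continuous.integrable_of_hasCompactSupport (by fun_prop) (hΦc.mono fun x hx => ?_)
    contrapose! hx
    simp only [Function.mem_support, not_not] at hx ⊢
    simp [hx]
  rw [← integral_sub_right_eq_self (fun x => ⟪Φ x, ((φ x - φ (x - -z)) / ‖-z‖ ^ p) • -z⟫) z,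
    eq_neg_iff_add_eq_zero, ← integral_add h1 (h2.comp_sub_right z)]
  have h3 : ∫ x, (φ x * (⟪Φ x, z⟫ / ‖z‖ ^ p) - φ (x - z) * (⟪Φ (x - z), z⟫ / ‖z‖ ^ p)) = 0 := by
    rw [integral_sub hg (hg.comp_sub_right z),
      integral_sub_right_eq_self (fun x => φ x * (⟪Φ x, z⟫ / ‖z‖ ^ p)) z, sub_self]
  rw [← h3]
  congr 1
  ext x
  simp only [sub_neg_eq_add, sub_add_cancel, norm_neg, inner_smul_right, inner_neg_right,
    inner_sub_left]
  ring

/-- Integration by parts for the Riesz fractional gradient and divergence of compactly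
supported Lipschitz functions. -/
theorem stmt2 (N : ℕ) (hN : 1 ≤ N) (s : ℝ) (hs : s ∈ Set.Ioo (0 : ℝ) 1)
    (φ : Euc N → ℝ) (Φ : Euc N → Euc N) (Lφ LΦ : ℝ≥0)
    (hφ : LipschitzWith Lφ φ) (hφc : HasCompactSupport φ)
    (hΦ : LipschitzWith LΦ Φ) (hΦc : HasCompactSupport Φ) :
    (∀ x, Integrable (gradIntegrand N s φ x)) ∧
    (∀ x, Integrable (divIntegrand N s Φ x)) ∧
    Integrable (fun x => φ x * fracDiv N s Φ x) ∧
    Integrable (fun x => ⟪Φ x, fracGrad N s φ x⟫) ∧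
    ∫ x, φ x * fracDiv N s Φ x = - ∫ x, ⟪Φ x, fracGrad N s φ x⟫ := by
  obtain ⟨Cφ, hCφ⟩ := increment_bound hφ hφc
  obtain ⟨CΦ, hCΦ⟩ := increment_bound hΦ hΦc
  have hw := majorant_integrable N hN s hs
  have hφm := hφ.continuous.measurable
  have hΦm := hΦ.continuous.measurable
  set p : ℝ := (N : ℝ) + s + 1 with hp
  let G : Euc N → Euc N → Euc N := fun x z => ((φ x - φ (x - z)) / ‖z‖ ^ p) • z
  let D : Euc N → Euc N → ℝ := fun x z => ⟪Φ x - Φ (x - z), z⟫ / ‖z‖ ^ p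
  have hGm : Measurable (fun q : Euc N × Euc N => G q.1 q.2) := by
    simp only [G]; fun_prop
  have hDm : Measurable (fun q : Euc N × Euc N => D q.1 q.2) := by
    simp only [D]; fun_prop
  have hGb : ∀ x z, ‖G x z‖ ≤ Cφ * majorant N s z := by
    intro x z
    have h0 : 0 ≤ ‖z‖ ^ p := by positivity
    simp only [G, majorant, norm_smul, norm_div, Real.norm_of_nonneg h0, ← hp]
    calc ‖φ x - φ (x - z)‖ / ‖z‖ ^ p * ‖z‖ ≤ Cφ * min ‖z‖ 1 / ‖z‖ ^ p * ‖z‖ := by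
          gcongr; exact hCφ x z
      _ = _ := by ring
  have hDb : ∀ x z, ‖D x z‖ ≤ CΦ * majorant N s z := by
    intro x z
    have h0 : 0 ≤ ‖z‖ ^ p := by positivity
    simp only [D, majorant, norm_div, Real.norm_of_nonneg h0, ← hp]
    calc ‖⟪Φ x - Φ (x - z), z⟫‖ / ‖z‖ ^ p ≤ CΦ * min ‖z‖ 1 * ‖z‖ / ‖z‖ ^ p := by
          gcongr
          exact (norm_inner_le_norm _ _).trans (by gcongr; exact hCΦ x z)
      _ = _ := by ring
  have hGi : ∀ x, Integrable (G x) := fun x =>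
    (hw.const_mul Cφ).mono' (hGm.comp measurable_prodMk_left).aestronglyMeasurable
      (.of_forall (hGb x))
  have hDi : ∀ x, Integrable (D x) := fun x =>
    (hw.const_mul CΦ).mono' (hDm.comp measurable_prodMk_left).aestronglyMeasurable
      (.of_forall (hDb x))
  -- The substitution `y = x - z` turns the two defining integrands into `G x` and `D x`.
  have hG : ∀ x, (fun y => G x (x - y)) = gradIntegrand N s φ x := fun x => by
    ext1 y; simp [G, gradIntegrand, hp]
  have hD : ∀ x, (fun y => D x (x - y)) = divIntegrand N s Φ x := fun x => by
    ext1 y; simp [D, divIntegrand, hp]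
  have hGrad : ∀ x, fracGrad N s φ x = mu N s • ∫ z, G x z := fun x => by
    rw [fracGrad, ← hG, integral_sub_left_eq_self (G x)]
  have hDiv : ∀ x, fracDiv N s Φ x = mu N s * ∫ z, D x z := fun x => by
    rw [fracDiv, ← hD, integral_sub_left_eq_self (D x)]
  have hφi : Integrable φ := hφ.continuous.integrable_of_hasCompactSupport hφc
  have hΦi : Integrable Φ := hΦ.continuous.integrable_of_hasCompactSupport hΦc
  have hF1 : Integrable (fun q : Euc N × Euc N => φ q.1 * D q.1 q.2) (volume.prod volume) := by
    refine (hφi.norm.mul_prod (hw.const_mul CΦ)).mono'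
      (by fun_prop : Measurable _).aestronglyMeasurable (.of_forall fun q => ?_)
    rw [norm_mul]
    gcongr
    exact hDb _ _
  have hF2 : Integrable (fun q : Euc N × Euc N => ⟪Φ q.1, G q.1 q.2⟫) (volume.prod volume) := by
    refine (hΦi.norm.mul_prod (hw.const_mul Cφ)).mono'
      (by fun_prop : Measurable _).aestronglyMeasurable (.of_forall fun q => ?_)
    refine (norm_inner_le_norm _ _).trans ?_
    gcongr
    exact hGb _ _
  have e1 : (fun x => φ x * fracDiv N s Φ x) = fun x => mu N s * ∫ z, φ x * D x z := by
    ext x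
    rw [hDiv, integral_const_mul]
    ring
  have e2 : (fun x => ⟪Φ x, fracGrad N s φ x⟫) = fun x => mu N s * ∫ z, ⟪Φ x, G x z⟫ := by
    ext x
    rw [hGrad, integral_inner (hGi x), inner_smul_right]
  refine ⟨fun x => hG x ▸ (hGi x).comp_sub_left x, fun x => hD x ▸ (hDi x).comp_sub_left x,
    ?_, ?_, ?_⟩
  · rw [e1]
    exact hF1.integral_prod_left.const_mul _
  · rw [e2]
    exact hF2.integral_prod_left.const_mul _
  · have sw1 : ∫ x, ∫ z, φ x * D x z = ∫ z, ∫ x, φ x * D x z := integral_integral_swap hF1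
    have sw2 : ∫ x, ∫ z, ⟪Φ x, G x z⟫ = ∫ z, ∫ x, ⟪Φ x, G x z⟫ := integral_integral_swap hF2
    rw [e1, e2, integral_const_mul, integral_const_mul, sw1, sw2, ← mul_neg, ← integral_neg,
      ← integral_neg_eq_self (fun z => -∫ x, ⟪Φ x, G x z⟫)]
    congr 2
    ext z
    exact slice_identity p hφ.continuous hφc hΦ.continuous hΦc z
end
end
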